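/- Fix n ≥ 1 and i ∈ {1,…,n}. Let F : ℝⁿ × ℝ → ℝ be a C² function and H : ℝⁿ → ℝ a differentiable function such that for all x ∈ ℝⁿ: ∂ᵢF(x, H(x)) = 0 and ∂_zF(x, H(x)) = 0. Then for every x, at the point (x, H(x)) one has (∂_z∂ᵢF)² = (∂_z²F)·(∂ᵢ²F). -/

import Mathlib

/-!
Write `h = ∂ᵢH(x)`. Differentiating `∂ᵢF(x, H(x)) = 0` and `∂_zF(x, H(x)) = 0` in `xᵢ` gives
`∂ᵢ²F + h ∂_z∂ᵢF = 0` and `∂ᵢ∂_zF + h ∂_z²F = 0` on the graph (`pdx_add_mul_pdz_eq_zero`).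
Since the mixed second derivatives of a `C²` function agree (`pdx_pdz_eq_pdz_pdx`), both
`(∂_z∂ᵢF)²` and `∂_z²F · ∂ᵢ²F` equal `-h ∂_z²F · ∂_z∂ᵢF`.
-/

/-- The `z`-partial derivative of a function on `ℝⁿ × ℝ`. -/
noncomputable def pdz {n : ℕ} (F : (Fin n → ℝ) × ℝ → ℝ) (p : (Fin n → ℝ) × ℝ) : ℝ :=
  fderiv ℝ F p (0, 1)

/-- The `xᵢ`-partial derivative of a function on `ℝⁿ × ℝ`. -/
noncomputable def pdx {n : ℕ} (i : Fin n) (F : (Fin n → ℝ) × ℝ → ℝ)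
    (p : (Fin n → ℝ) × ℝ) : ℝ :=
  fderiv ℝ F p (Pi.single i 1, 0)

/-- The chain rule in the direction `xᵢ` for a function vanishing on the graph of `H`. -/
theorem pdx_add_mul_pdz_eq_zero {n : ℕ} (i : Fin n) {G : (Fin n → ℝ) × ℝ → ℝ}
    (hG : Differentiable ℝ G) {H : (Fin n → ℝ) → ℝ} (hH : Differentiable ℝ H)
    (h0 : ∀ x, G (x, H x) = 0) (x : Fin n → ℝ) :
    pdx i G (x, H x) + fderiv ℝ H x (Pi.single i 1) * pdz G (x, H x) = 0 := by
  have hc : HasFDerivAt (fun y => G (y, H y))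
      ((fderiv ℝ G (x, H x)).comp ((ContinuousLinearMap.id ℝ _).prod (fderiv ℝ H x))) x :=
    HasFDerivAt.comp (g := G) (f := fun y => (y, H y)) x (hG (x, H x)).hasFDerivAt
      ((hasFDerivAt_id x).prodMk (hH x).hasFDerivAt)
  have hz : HasFDerivAt (fun y => G (y, H y)) (0 : (Fin n → ℝ) →L[ℝ] ℝ) x := by
    simp only [h0]
    exact hasFDerivAt_const 0 x
  have he := DFunLike.congr_fun (hc.unique hz) (Pi.single i 1)
  simp only [ContinuousLinearMap.comp_apply, ContinuousLinearMap.prod_apply,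
    ContinuousLinearMap.id_apply, zero_apply] at he
  have hv : ((Pi.single i 1 : Fin n → ℝ), fderiv ℝ H x (Pi.single i 1))
      = (Pi.single i 1, 0) + fderiv ℝ H x (Pi.single i 1) • ((0 : Fin n → ℝ), (1 : ℝ)) := by
    simp
  rw [hv, map_add, map_smul, smul_eq_mul] at he
  exact he

theorem differentiable_fderiv_of_contDiff_two {n : ℕ} {F : (Fin n → ℝ) × ℝ → ℝ}
    (hF : ContDiff ℝ 2 F) : Differentiable ℝ (fderiv ℝ F) :=
  (hF.fderiv_right (m := 1) (by norm_num)).differentiable (by norm_num)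

theorem pdx_pdz_eq_pdz_pdx {n : ℕ} (i : Fin n) {F : (Fin n → ℝ) × ℝ → ℝ}
    (hF : ContDiff ℝ 2 F) (p : (Fin n → ℝ) × ℝ) :
    pdx i (pdz F) p = pdz (pdx i F) p := by
  have hd (v w) : fderiv ℝ (fun q => fderiv ℝ F q v) p w = fderiv ℝ (fderiv ℝ F) p w v := by
    rw [fderiv_clm_apply (differentiable_fderiv_of_contDiff_two hF p)
      (differentiableAt_const v)]
    simp
  have hs : IsSymmSndFDerivAt ℝ F p := hF.contDiffAt.isSymmSndFDerivAt (by simp)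
  exact (hd _ _).trans ((hs _ _).trans (hd _ _).symm)

/-- Free-boundary identity: if `F` is `C²`, `H` differentiable, and both `∂ᵢF` and `∂_zF`
vanish along the graph `z = H(x)`, then `(∂_z∂ᵢF)² = (∂_z²F)·(∂ᵢ²F)` on that graph. -/
theorem free_boundary_identity {n : ℕ} (hn : 1 ≤ n) (i : Fin n)
    (F : (Fin n → ℝ) × ℝ → ℝ) (hF : ContDiff ℝ 2 F)
    (H : (Fin n → ℝ) → ℝ) (hH : Differentiable ℝ H)
    (hFi : ∀ x : Fin n → ℝ, pdx i F (x, H x) = 0)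
    (hFz : ∀ x : Fin n → ℝ, pdz F (x, H x) = 0) :
    ∀ x : Fin n → ℝ,
      (pdz (pdx i F) (x, H x)) ^ 2 = pdz (pdz F) (x, H x) * pdx i (pdx i F) (x, H x) := by
  intro x
  have hd := differentiable_fderiv_of_contDiff_two hF
  have hi : Differentiable ℝ (pdx i F) := hd.clm_apply (differentiable_const _)
  have hz : Differentiable ℝ (pdz F) := hd.clm_apply (differentiable_const _)
  have h1 := pdx_add_mul_pdz_eq_zero i hi hH hFi x
  have h2 := pdx_add_mul_pdz_eq_zero i hz hH hFz x
  rw [pdx_pdz_eq_pdz_pdx i hF] at h2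
  linear_combination pdz (pdx i F) (x, H x) * h2 - pdz (pdz F) (x, H x) * h1
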